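/- For u, w, g ∈ {0,1} let n_{uwg} = ((−1)^g/√3)·((−1)^u, (−1)^{u+w}, (−1)^w) ∈ ℝ³ and P_{uwg} = ½(I + n_{uwg}·σ) the corresponding rank-one projector on ℂ² (σ the vector of Pauli matrices), and define the POVM M_{uw} = ½·P_{uw1}. Then (M_{uw})_{u,w∈{0,1}} is a POVM on ℂ² and for every b = (u,w) ∈ {0,1}²: tr(M_b P_{b0}) = 0 and tr(M_m P_{b0}) = 1/3 for every m ∈ {0,1}² with m ≠ b; consequently the conditional Shannon entropy of the uniformly distributed basis key B ∈ {0,1}² given the measurement outcome equals log₂ 3. -/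

import Mathlib

open Matrix ComplexOrder

/-- Conditional Shannon entropy of a joint distribution `P(b,m)`,
with the convention `0·log 0 = 0`. -/
noncomputable def condEnt {B M : Type*} [Fintype B] [Fintype M] (P : B → M → ℝ) : ℝ :=
  ∑ m : M, (∑ b : B, P b m) *
    ∑ b : B, (P b m / ∑ b' : B, P b' m) * Real.logb 2 (1 / (P b m / ∑ b' : B, P b' m))

def pauliX : Matrix (Fin 2) (Fin 2) ℂ := !![0, 1; 1, 0]
def pauliY : Matrix (Fin 2) (Fin 2) ℂ := !![0, -Complex.I; Complex.I, 0]
def pauliZ : Matrix (Fin 2) (Fin 2) ℂ := !![1, 0; 0, -1]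

/-- `n·σ = n_x σ_x + n_y σ_y + n_z σ_z` for a real vector `n`. -/
noncomputable def pauliVec (a b c : ℝ) : Matrix (Fin 2) (Fin 2) ℂ :=
  (a : ℂ) • pauliX + (b : ℂ) • pauliY + (c : ℂ) • pauliZ

/-- The 8-state projector `P_{uwg} = (I + n_{uwg}·σ)/2` with Bloch vector
`n_{uwg} = ((-1)^g/√3)·((-1)^u, (-1)^{u+w}, (-1)^w)`. -/
noncomputable def P8 (u w g : Fin 2) : Matrix (Fin 2) (Fin 2) ℂ :=
  (1/2 : ℂ) • (1 + pauliVec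
    ((-1:ℝ)^(g.val) * (-1:ℝ)^(u.val) / Real.sqrt 3)
    ((-1:ℝ)^(g.val) * (-1:ℝ)^(u.val + w.val) / Real.sqrt 3)
    ((-1:ℝ)^(g.val) * (-1:ℝ)^(w.val) / Real.sqrt 3))

/-- The Shannon-optimal POVM `M_{uw} = P_{uw1}/2` for attack K1 on the 8-state
basis key. -/
noncomputable def Mpovm8 (b : Fin 2 × Fin 2) : Matrix (Fin 2) (Fin 2) ℂ :=
  (1/2 : ℂ) • P8 b.1 b.2 1

/-!
The Bloch vectors of the four states with `g = 0` are the vertices of a regular tetrahedron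
inscribed in the Bloch sphere, and the POVM elements point at the four antipodes. Distinct vertices
have inner product `-1/3` and `tr (ρ_n ρ_m) = (1 + n·m) / 2`, so the outcome `m` excludes the basis
`m` and leaves the other three equally likely, each posterior having entropy `log₂ 3`. Completeness
of the POVM holds because the vertices sum to zero.
-/

section Entropy

variable {B M : Type*} [Fintype B] [Fintype M] [DecidableEq B]

theorem condEnt_ite_mem (S : M → Finset B) (p : M → ℝ) :
    condEnt (fun b m => if b ∈ S m then p m else 0) =
      ∑ m, (S m).card * p m * Real.logb 2 (S m).card := by
  refine Finset.sum_congr rfl fun m _ => ?_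
  have marginal : ∑ b, (if b ∈ S m then p m else 0) = (S m).card * p m := by
    simp only [Finset.sum_ite_mem, Finset.univ_inter, Finset.sum_const, nsmul_eq_mul]
  rw [marginal]
  rcases eq_or_ne ((S m).card * p m) 0 with hq | hq
  · rw [hq, zero_mul, zero_mul]
  obtain ⟨hcard, hp⟩ := mul_ne_zero_iff.mp hq
  have posterior (b : B) : (if b ∈ S m then p m else 0) / ((S m).card * p m) =
      if b ∈ S m then ((S m).card : ℝ)⁻¹ else 0 := by
    split_ifs
    · field_simp
    · exact zero_div _
  simp only [posterior, ite_mul, zero_mul]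
  rw [Finset.sum_ite_mem, Finset.univ_inter]
  congr 1
  calc ∑ b ∈ S m, ((S m).card : ℝ)⁻¹ * Real.logb 2 (1 / if b ∈ S m then ((S m).card : ℝ)⁻¹ else 0)
      = ∑ _b ∈ S m, ((S m).card : ℝ)⁻¹ * Real.logb 2 (S m).card :=
        Finset.sum_congr rfl fun b hb => by rw [if_pos hb, one_div, inv_inv]
    _ = Real.logb 2 (S m).card := by
        rw [Finset.sum_const, nsmul_eq_mul, mul_inv_cancel_left₀ hcard]

end Entropy

section Bloch

/-- The map `n ↦ n·σ`. It is bundled as a real-linear map on `Fin 3 → ℝ` so that the Pauli algebra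
can be expressed with the dot and cross products, and sums of Bloch vectors pass through it. -/
noncomputable def pauliDot : (Fin 3 → ℝ) →ₗ[ℝ] Matrix (Fin 2) (Fin 2) ℂ where
  toFun n := pauliVec (n 0) (n 1) (n 2)
  map_add' n m := by
    simp only [pauliVec, Pi.add_apply, Complex.ofReal_add]
    module
  map_smul' r n := by
    simp only [pauliVec, Pi.smul_apply, smul_eq_mul, Complex.ofReal_mul, mul_smul,
      Complex.coe_smul, smul_add, RingHom.id_apply]

theorem pauliDot_apply (n : Fin 3 → ℝ) :
    pauliDot n = !![(n 2 : ℂ), n 0 - n 1 * Complex.I; n 0 + n 1 * Complex.I, -n 2] := by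
  ext i j
  fin_cases i <;> fin_cases j <;>
    simp [pauliDot, pauliVec, pauliX, pauliY, pauliZ, sub_eq_add_neg]

theorem isHermitian_pauliDot (n : Fin 3 → ℝ) : (pauliDot n).IsHermitian := by
  ext i j
  fin_cases i <;> fin_cases j <;> simp [pauliDot_apply, sub_eq_add_neg]

theorem trace_pauliDot (n : Fin 3 → ℝ) : (pauliDot n).trace = 0 := by
  rw [pauliDot_apply, trace_fin_two_of, add_neg_cancel]

theorem pauliDot_mul_pauliDot (n m : Fin 3 → ℝ) :
    pauliDot n * pauliDot m = ((n ⬝ᵥ m : ℝ) : ℂ) • 1 + Complex.I • pauliDot (n ⨯₃ m) := by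
  simp only [pauliDot_apply, cross_apply, vec3_dotProduct, mul_fin_two, one_fin_two, smul_of,
    smul_cons, smul_empty, smul_eq_mul, of_add_of, add_cons, head_cons, tail_cons, empty_add_empty,
    cons_val]
  push_cast
  congrm !![?_, ?_; ?_, ?_] <;> grind [Complex.I_mul_I]

theorem pauliDot_mul_self (n : Fin 3 → ℝ) :
    pauliDot n * pauliDot n = ((n ⬝ᵥ n : ℝ) : ℂ) • 1 := by
  rw [pauliDot_mul_pauliDot, cross_self, map_zero, smul_zero, add_zero]

theorem trace_pauliDot_mul_pauliDot (n m : Fin 3 → ℝ) :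
    (pauliDot n * pauliDot m).trace = 2 * ((n ⬝ᵥ m : ℝ) : ℂ) := by
  rw [pauliDot_mul_pauliDot, trace_add, trace_smul, trace_smul, trace_pauliDot, trace_one,
    Fintype.card_fin, smul_zero, add_zero, smul_eq_mul, mul_comm, Nat.cast_ofNat]

/-- The qubit operator `(I + n·σ)/2` with Bloch vector `n`, in terms of which the traces, positivity
and sums of the states are computed. The vector is not required to lie in the unit ball; the
operator is a density matrix when it does. -/
noncomputable def blochMatrix (n : Fin 3 → ℝ) : Matrix (Fin 2) (Fin 2) ℂ :=
  (1 / 2 : ℂ) • (1 + pauliDot n)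

theorem isHermitian_blochMatrix (n : Fin 3 → ℝ) : (blochMatrix n).IsHermitian :=
  (isHermitian_one.add (isHermitian_pauliDot n)).smul (by simp [IsSelfAdjoint])

theorem blochMatrix_eq_mul_self_add (n : Fin 3 → ℝ) :
    blochMatrix n = blochMatrix n * blochMatrix n + (((1 - n ⬝ᵥ n) / 4 : ℝ) : ℂ) • 1 := by
  simp only [blochMatrix, smul_mul_smul_comm, mul_add, add_mul, mul_one, one_mul,
    pauliDot_mul_self]
  push_cast
  module

theorem posSemidef_blochMatrix {n : Fin 3 → ℝ} (hn : n ⬝ᵥ n ≤ 1) : (blochMatrix n).PosSemidef := by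
  have h_square : (blochMatrix n * blochMatrix n).PosSemidef := by
    simpa only [(isHermitian_blochMatrix n).eq] using
      posSemidef_conjTranspose_mul_self (blochMatrix n)
  have h_defect : (0 : ℂ) ≤ ((1 - n ⬝ᵥ n) / 4 : ℝ) :=
    Complex.zero_le_real.mpr (by linarith)
  rw [blochMatrix_eq_mul_self_add]
  exact h_square.add (PosSemidef.one.smul h_defect)

theorem trace_blochMatrix_mul_blochMatrix (n m : Fin 3 → ℝ) :
    (blochMatrix n * blochMatrix m).trace = ((1 + n ⬝ᵥ m) / 2 : ℝ) := by
  simp only [blochMatrix, smul_mul_smul_comm, mul_add, add_mul, mul_one, one_mul, trace_smul,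
    trace_add, trace_one, trace_pauliDot, trace_pauliDot_mul_pauliDot, Fintype.card_fin,
    smul_eq_mul]
  push_cast
  ring

theorem sum_blochMatrix_of_sum_eq_zero {ι : Type*} {s : Finset ι} {n : ι → Fin 3 → ℝ}
    (hn : ∑ i ∈ s, n i = 0) : ∑ i ∈ s, blochMatrix (n i) = (s.card / 2 : ℂ) • 1 := by
  simp only [blochMatrix]
  rw [← Finset.smul_sum, Finset.sum_add_distrib, ← map_sum, hn, map_zero, add_zero,
    Finset.sum_const]
  module

end Bloch

section EightState

/-- The sign vector `((-1)^u, (-1)^(u+w), (-1)^w)` of the basis `b = (u, w)`. These are the vertices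
of the cube `[-1, 1]³` whose coordinates have product `1`, hence a regular tetrahedron; rescaled to
unit length they are the Bloch vectors of the states with `g = 0`. -/
def tetraVertex (b : Fin 2 × Fin 2) : Fin 3 → ℝ :=
  ![(-1) ^ b.1.val, (-1) ^ (b.1.val + b.2.val), (-1) ^ b.2.val]

theorem tetraVertex_dotProduct (b b' : Fin 2 × Fin 2) :
    tetraVertex b ⬝ᵥ tetraVertex b' = if b = b' then 3 else -1 := by
  obtain ⟨u, w⟩ := b
  obtain ⟨u', w'⟩ := b'
  fin_cases u <;> fin_cases w <;> fin_cases u' <;> fin_cases w' <;>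
    norm_num [tetraVertex, vec3_dotProduct]

theorem sum_tetraVertex : ∑ b, tetraVertex b = 0 := by
  ext i
  fin_cases i <;> simp [tetraVertex, Fintype.sum_prod_type, Fin.sum_univ_two]

/-- The Bloch vector `n_{uwg}` of the encoding of the bit `g` in the basis `b = (u, w)`, with `g`
selecting between a tetrahedron vertex and its antipode. -/
noncomputable def bloch8 (b : Fin 2 × Fin 2) (g : Fin 2) : Fin 3 → ℝ :=
  ((-1) ^ g.val / √3) • tetraVertex b

theorem P8_eq_blochMatrix (b : Fin 2 × Fin 2) (g : Fin 2) :
    P8 b.1 b.2 g = blochMatrix (bloch8 b g) := by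
  simp [P8, blochMatrix, pauliDot, bloch8, tetraVertex, mul_div_right_comm]

theorem Mpovm8_eq_smul_blochMatrix (b : Fin 2 × Fin 2) :
    Mpovm8 b = (1 / 2 : ℂ) • blochMatrix (bloch8 b 1) := by
  rw [Mpovm8, P8_eq_blochMatrix]

theorem bloch8_dotProduct (b b' : Fin 2 × Fin 2) (g g' : Fin 2) :
    bloch8 b g ⬝ᵥ bloch8 b' g' = (-1) ^ (g.val + g'.val) * if b = b' then 1 else -1 / 3 := by
  have h_scale : (-1) ^ g.val / √3 * ((-1) ^ g'.val / √3) = (-1) ^ (g.val + g'.val) / 3 := by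
    rw [div_mul_div_comm, Real.mul_self_sqrt zero_le_three, pow_add]
  rw [bloch8, bloch8, smul_dotProduct, dotProduct_smul, tetraVertex_dotProduct, smul_eq_mul,
    smul_eq_mul, ← mul_assoc, h_scale]
  split_ifs <;> ring

theorem bloch8_dotProduct_self (b : Fin 2 × Fin 2) (g : Fin 2) :
    bloch8 b g ⬝ᵥ bloch8 b g = 1 := by
  rw [bloch8_dotProduct, if_pos rfl, mul_one, Even.neg_one_pow ⟨_, rfl⟩]

theorem sum_bloch8 (g : Fin 2) : ∑ b, bloch8 b g = 0 := by
  simp only [bloch8]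
  rw [← Finset.smul_sum, sum_tetraVertex, smul_zero]

theorem posSemidef_Mpovm8 (b : Fin 2 × Fin 2) : (Mpovm8 b).PosSemidef := by
  rw [Mpovm8_eq_smul_blochMatrix]
  exact (posSemidef_blochMatrix (bloch8_dotProduct_self b 1).le).smul one_half_pos.le

theorem sum_Mpovm8 : ∑ b, Mpovm8 b = 1 := by
  simp only [Mpovm8_eq_smul_blochMatrix]
  rw [← Finset.smul_sum, sum_blochMatrix_of_sum_eq_zero (sum_bloch8 1), smul_smul]
  norm_num

theorem trace_Mpovm8_mul_P8 (m b : Fin 2 × Fin 2) :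
    (Mpovm8 m * P8 b.1 b.2 0).trace = if m = b then 0 else (1 / 3 : ℂ) := by
  rw [Mpovm8_eq_smul_blochMatrix, P8_eq_blochMatrix, smul_mul_assoc, trace_smul,
    trace_blochMatrix_mul_blochMatrix, bloch8_dotProduct]
  split_ifs <;> norm_num

theorem trace_re_Mpovm8_mul_P8_div_four (b m : Fin 2 × Fin 2) :
    (Mpovm8 m * P8 b.1 b.2 0).trace.re / 4 =
      if b ∈ ({m}ᶜ : Finset (Fin 2 × Fin 2)) then 1 / 12 else 0 := by
  rw [trace_Mpovm8_mul_P8]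
  rcases eq_or_ne m b with rfl | h
  · simp
  · norm_num [h, h.symm]

theorem condEnt_Mpovm8 :
    condEnt (fun b m : Fin 2 × Fin 2 => (Mpovm8 m * P8 b.1 b.2 0).trace.re / 4) =
      Real.logb 2 3 := by
  have card_others (m : Fin 2 × Fin 2) : ({m}ᶜ : Finset (Fin 2 × Fin 2)).card = 3 := by
    rw [Finset.card_compl, Finset.card_singleton, Fintype.card_prod, Fintype.card_fin]
  simp only [trace_re_Mpovm8_mul_P8_div_four]
  rw [condEnt_ite_mem (fun m => {m}ᶜ) (fun _ => 1 / 12)]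
  simp only [card_others, Finset.sum_const, Finset.card_univ, Fintype.card_prod, Fintype.card_fin,
    nsmul_eq_mul]
  push_cast
  ring

end EightState

/-- **Attack K1 on 8-state encoding, Shannon entropy.** `M_{uw} = P_{uw1}/2` is
a POVM with `tr(M_b P_{b0}) = 0` and `tr(M_m P_{b0}) = 1/3` for `m ≠ b`, so the
conditional Shannon entropy of the uniform basis key `B` given the outcome is
`log₂ 3`. -/
theorem stmt19 :
    ((∀ b, (Mpovm8 b).PosSemidef) ∧ (∑ b, Mpovm8 b) = 1) ∧
    (∀ b : Fin 2 × Fin 2, (Mpovm8 b * P8 b.1 b.2 0).trace = 0) ∧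
    (∀ b m : Fin 2 × Fin 2, m ≠ b → (Mpovm8 m * P8 b.1 b.2 0).trace = (1/3 : ℂ)) ∧
    condEnt (fun b m : Fin 2 × Fin 2 => ((Mpovm8 m * P8 b.1 b.2 0).trace.re) / 4) =
      Real.logb 2 3 := by
  refine ⟨⟨posSemidef_Mpovm8, sum_Mpovm8⟩, fun b => ?_, fun b m h => ?_, condEnt_Mpovm8⟩
  · rw [trace_Mpovm8_mul_P8, if_pos rfl]
  · rw [trace_Mpovm8_mul_P8, if_neg h]
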